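/- Let p ∈ (1;2), let a < b, let y₀ ∈ ℝ, let x : [a;b] → ℝ be continuous with finite p-variation, and let F : ℝ → ℝ be globally 1-Lipschitz, i.e. there is K ≥ 0 with |F(u) − F(v)| ≤ K·|u − v| for all u, v ∈ ℝ. Then there exists a function y : [a;b] → ℝ of finite p-variation such that for every t ∈ [a;b] the Riemann–Stieltjes integral ∫_a^t F(y(s)) dx(s) exists and y(t) = y₀ + ∫_a^t F(y(s)) dx(s). -/

import Mathlib

open Filter Set

/-- Truncated variation of `f` on `[a;b]` with truncation parameter `δ`. -/
noncomputable def truncVar (f : ℝ → ℝ) (δ a b : ℝ) : ENNReal :=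
  ⨆ (n : ℕ) (t : Fin (n + 1) → ℝ) (_ : StrictMono t)
    (_ : ∀ i, t i ∈ Set.Icc a b),
    ∑ i : Fin n, ENNReal.ofReal (|f (t i.succ) - f (t i.castSucc)| - δ)

/-- p-variation of `f` on `[a;b]`. -/
noncomputable def pVar (f : ℝ → ℝ) (p a b : ℝ) : ENNReal :=
  ⨆ (n : ℕ) (t : Fin (n + 1) → ℝ) (_ : StrictMono t)
    (_ : ∀ i, t i ∈ Set.Icc a b),
    ∑ i : Fin n, ENNReal.ofReal (|f (t i.succ) - f (t i.castSucc)| ^ p)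

/-- The p-variation norm `(V^p(f,[a;b]))^{1/p}`. -/
noncomputable def pVarNorm (f : ℝ → ℝ) (p a b : ℝ) : ℝ :=
  (pVar f p a b).toReal ^ (1 / p)

/-- Oscillation norm `sup_{a ≤ s < t ≤ b} |f t - f s|`. -/
noncomputable def oscNorm (f : ℝ → ℝ) (a b : ℝ) : ℝ :=
  sSup {x | ∃ s ∈ Set.Icc a b, ∃ t ∈ Set.Icc a b, s < t ∧ x = |f t - f s|}

/-- Sup norm `sup_{a ≤ t ≤ b} |f t|`. -/
noncomputable def supNorm (f : ℝ → ℝ) (a b : ℝ) : ℝ :=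
  sSup {x | ∃ t ∈ Set.Icc a b, x = |f t|}

/-- `I` is the Riemann–Stieltjes integral `∫_a^b f dg`. -/
def RSIntegral (f g : ℝ → ℝ) (a b : ℝ) (I : ℝ) : Prop :=
  ∀ ε > (0 : ℝ), ∃ δ > (0 : ℝ), ∀ (n : ℕ) (t : Fin (n + 1) → ℝ) (ξ : Fin n → ℝ),
    StrictMono t → t 0 = a → t (Fin.last n) = b →
    (∀ i : Fin n, t i.castSucc ≤ ξ i ∧ ξ i ≤ t i.succ) →
    (∀ i : Fin n, t i.succ - t i.castSucc < δ) →
    |∑ i : Fin n, f (ξ i) * (g (t i.succ) - g (t i.castSucc)) - I| < ε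

/-- `f` is regulated on `[a;b]`: all the relevant one-sided limits exist and are finite. -/
def Regulated (f : ℝ → ℝ) (a b : ℝ) : Prop :=
  (∃ L : ℝ, Tendsto f (nhdsWithin a (Set.Ioi a)) (nhds L)) ∧
  (∃ L : ℝ, Tendsto f (nhdsWithin b (Set.Iio b)) (nhds L)) ∧
  ∀ x ∈ Set.Ioo a b,
    (∃ L : ℝ, Tendsto f (nhdsWithin x (Set.Iio x)) (nhds L)) ∧
    (∃ L : ℝ, Tendsto f (nhdsWithin x (Set.Ioi x)) (nhds L))

/-- `f` and `g` have no common points of discontinuity on `[a;b]`. -/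
def NoCommonDiscont (f g : ℝ → ℝ) (a b : ℝ) : Prop :=
  ∀ x ∈ Set.Icc a b,
    ContinuousWithinAt f (Set.Icc a b) x ∨ ContinuousWithinAt g (Set.Icc a b) x

/-!
A function of finite `p`-variation is dominated by a control, a superadditive function `ω` of
intervals; for continuous `x` one gets `|x t - x s| ≤ ω s t ^ α` with some `α > 1 / 2` and with `ω`
small near the diagonal. Following Davie, consider the Euler schemes `y` of `dy = F(y) dx` and the
defects `J s t = y t - y s - F (y s) (x t - x s)`. They are almost additive,
`|J s t| ≤ |J s u| + |J u t| + K |y u - y s| |x t - x u|`, and splitting `[s;t]` where `ω` is halved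
shrinks the sum of `ω ^ (2 * α)` by a definite factor, so that on intervals where `ω` is small
`|J s t| ≤ C ω s t ^ (2 * α)` uniformly over all partitions. By compactness this bound survives in
the limit over all finite sets of nodes, and such local solutions can be glued. Since `2 * α > 1`,
the bound says that `y` is the Riemann–Stieltjes integral of `F ∘ y` against `x`.
-/

/-! ### Controls and `p`-variation -/

/-- A control on a preorder, as in rough path theory: a nonnegative superadditive function of
ordered pairs. It is kept as a total function; its values off `{s ≤ t}` are irrelevant. -/
structure IsControl {ι : Type*} [Preorder ι] (ω : ι → ι → ℝ) : Prop where
  nonneg : ∀ {s t : ι}, s ≤ t → 0 ≤ ω s t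
  superadditive : ∀ {s u t : ι}, s ≤ u → u ≤ t → ω s u + ω u t ≤ ω s t

/-- A control on the line is uniformly small near the diagonal. -/
def VanishesNearDiagonal (ω : ℝ → ℝ → ℝ) : Prop :=
  ∀ ε > 0, ∃ δ > 0, ∀ s t, s ≤ t → t - s < δ → ω s t ≤ ε

namespace IsControl

section Preorder

variable {ι κ : Type*} [Preorder ι] [Preorder κ] {ω : ι → ι → ℝ} {α : ℝ}

lemma self_eq_zero (hω : IsControl ω) (s : ι) : ω s s = 0 := by
  linarith [hω.nonneg (le_refl s), hω.superadditive (le_refl s) (le_refl s)]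

lemma mono (hω : IsControl ω) {s u v t : ι} (hsu : s ≤ u) (huv : u ≤ v) (hvt : v ≤ t) :
    ω u v ≤ ω s t := by
  linarith [hω.superadditive hsu (huv.trans hvt), hω.superadditive huv hvt,
    hω.nonneg hsu, hω.nonneg hvt]

lemma rpow_nonneg (hω : IsControl ω) {s t : ι} (hst : s ≤ t) : 0 ≤ ω s t ^ α :=
  Real.rpow_nonneg (hω.nonneg hst) α

lemma rpow_mono (hω : IsControl ω) (hα : 0 ≤ α) {s u v t : ι} (hsu : s ≤ u) (huv : u ≤ v)
    (hvt : v ≤ t) : ω u v ^ α ≤ ω s t ^ α :=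
  Real.rpow_le_rpow (hω.nonneg huv) (hω.mono hsu huv hvt) hα

lemma comp_monotone (hω : IsControl ω) {f : κ → ι} (hf : Monotone f) :
    IsControl fun s t => ω (f s) (f t) where
  nonneg h := hω.nonneg (hf h)
  superadditive h h' := hω.superadditive (hf h) (hf h')

lemma add {ω' : ι → ι → ℝ} (hω : IsControl ω) (hω' : IsControl ω') :
    IsControl fun s t => ω s t + ω' s t where
  nonneg h := add_nonneg (hω.nonneg h) (hω'.nonneg h)
  superadditive h h' := by linarith [hω.superadditive h h', hω'.superadditive h h']

lemma const_mul (hω : IsControl ω) {c : ℝ} (hc : 0 ≤ c) : IsControl fun s t => c * ω s t where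
  nonneg h := mul_nonneg hc (hω.nonneg h)
  superadditive h h' := by
    rw [← mul_add]
    exact mul_le_mul_of_nonneg_left (hω.superadditive h h') hc

lemma sum_le (hω : IsControl ω) :
    ∀ {n : ℕ} {τ : Fin (n + 1) → ι}, Monotone τ →
      ∑ i : Fin n, ω (τ i.castSucc) (τ i.succ) ≤ ω (τ 0) (τ (Fin.last n))
  | 0, τ, _ => by simpa using hω.nonneg le_rfl
  | n + 1, τ, hτ => by
    rw [Fin.sum_univ_castSucc]
    have init := hω.sum_le (τ := fun i => τ i.castSucc) fun i j hij => hτ (by simpa using hij)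
    have last := hω.superadditive (hτ (Fin.zero_le (Fin.last n).castSucc))
      (hτ (Fin.castSucc_le_succ (Fin.last n)))
    simp only [Fin.succ_castSucc, Fin.succ_last, Fin.castSucc_zero] at init last ⊢
    linarith

end Preorder

lemma exists_split {ω : ℕ → ℕ → ℝ} (hω : IsControl ω) {i j : ℕ} (hij : i < j) :
    ∃ m, i ≤ m ∧ m < j ∧ ω i m ≤ ω i j / 2 ∧ ω (m + 1) j ≤ ω i j / 2 := by
  classical
  have hωij := hω.nonneg hij.le
  let IsLeft : ℕ → Prop := fun m => ω i m ≤ ω i j / 2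
  have hi : IsLeft i := by
    have := hω.self_eq_zero i
    simp only [IsLeft]
    linarith
  obtain ⟨m, hm⟩ : ∃ m, Nat.findGreatest IsLeft (j - 1) = m := ⟨_, rfl⟩
  obtain ⟨hmj, hleft, hgreatest⟩ := Nat.findGreatest_eq_iff.1 hm
  have him : i ≤ m := hm ▸ Nat.le_findGreatest (by lia) hi
  refine ⟨m, him, by lia, if h : m = 0 then ?_ else hleft h, ?_⟩
  · obtain rfl : i = m := by lia
    exact hi
  · rcases (show m + 1 ≤ j by lia).eq_or_lt with rfl | hlt
    · linarith [hω.self_eq_zero (m + 1)]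
    · have hright : ω i j / 2 < ω i (m + 1) := not_le.1 (hgreatest m.lt_succ_self (by lia))
      linarith [hω.superadditive (show i ≤ m + 1 by lia) hlt.le]

end IsControl

lemma isControl_sub_of_antitone {ι : Type*} [Preorder ι] {φ : ι → ℝ} (hφ : Antitone φ) :
    IsControl fun s t => φ s - φ t where
  nonneg h := sub_nonneg.2 (hφ h)
  superadditive _ _ := (sub_add_sub_cancel _ _ _).le

lemma rpow_le_rpow_sub_one_mul {r m e : ℝ} (hr : 0 ≤ r) (hrm : r ≤ m) (he : 1 ≤ e) :
    r ^ e ≤ m ^ (e - 1) * r :=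
  calc r ^ e = r ^ (e - 1) * r := by
        conv_lhs => rw [← sub_add_cancel e 1]
        rw [Real.rpow_add_of_nonneg hr (by linarith) zero_le_one, Real.rpow_one]
    _ ≤ m ^ (e - 1) * r := by
        have := Real.rpow_le_rpow hr hrm (sub_nonneg.2 he)
        gcongr

lemma add_rpow_le_two_mul_rpow_add {r s p : ℝ} (hr : 0 ≤ r) (hs : 0 ≤ s) (hp : 0 ≤ p) :
    (r + s) ^ p ≤ (2 * r) ^ p + (2 * s) ^ p := by
  rcases le_total r s with h | h
  · exact (Real.rpow_le_rpow (by positivity) (by linarith) hp).trans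
      (le_add_of_nonneg_left (by positivity))
  · exact (Real.rpow_le_rpow (by positivity) (by linarith) hp).trans
      (le_add_of_nonneg_right (by positivity))

section PVariation

variable {f : ℝ → ℝ} {p a b : ℝ}

lemma sum_le_pVar {n : ℕ} {τ : Fin (n + 1) → ℝ} (hτ : StrictMono τ) (hmem : ∀ i, τ i ∈ Icc a b) :
    ∑ i : Fin n, ENNReal.ofReal (|f (τ i.succ) - f (τ i.castSucc)| ^ p) ≤ pVar f p a b :=
  le_iSup_of_le n <| le_iSup_of_le τ <| le_iSup_of_le hτ <| le_iSup_of_le hmem le_rfl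

lemma ofReal_add_sum_le_pVar {n : ℕ} {τ : Fin (n + 1) → ℝ} {s : ℝ} (hτ : StrictMono τ)
    (hmem : ∀ i, τ i ∈ Icc a b) (hs : s ∈ Icc a b) (hsτ : s < τ 0) :
    ENNReal.ofReal (|f (τ 0) - f s| ^ p) +
      ∑ i : Fin n, ENNReal.ofReal (|f (τ i.succ) - f (τ i.castSucc)| ^ p) ≤ pVar f p a b := by
  have h := sum_le_pVar (f := f) (p := p) (strictMono_vecCons.2 ⟨hsτ, hτ⟩)
    (Fin.cases hs hmem)
  rw [Fin.sum_univ_succ] at h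
  exact h

lemma pVar_anti_left {s t : ℝ} (hst : s ≤ t) : pVar f p t b ≤ pVar f p s b :=
  iSup_le fun _ => iSup_le fun _ => iSup_le fun hτ => iSup_le fun hmem =>
    sum_le_pVar hτ fun i => Icc_subset_Icc_left hst (hmem i)

lemma ofReal_add_pVar_le (hp : 0 < p) {s t : ℝ} (hst : s ≤ t) (htb : t ≤ b) :
    ENNReal.ofReal (|f t - f s| ^ p) + pVar f p t b ≤ pVar f p s b := by
  rcases hst.eq_or_lt with rfl | hlt
  · simp [Real.zero_rpow hp.ne']
  have hs : s ∈ Icc s b := ⟨le_rfl, hst.trans htb⟩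
  have ht : t ∈ Icc s b := ⟨hst, htb⟩
  have hfirst : ENNReal.ofReal (|f t - f s| ^ p) ≤ pVar f p s b := by
    simpa using ofReal_add_sum_le_pVar (f := f) (p := p) (τ := fun _ : Fin 1 => t)
      (Fin.strictMono_iff_lt_succ.2 fun i => i.elim0) (fun _ => ht) hs hlt
  refine add_le_of_le_tsub_left_of_le hfirst <|
    iSup_le fun n => iSup_le fun τ => iSup_le fun hτ => iSup_le fun hmem => ?_
  refine ENNReal.le_sub_of_add_le_left ENNReal.ofReal_ne_top ?_
  have hmem' : ∀ i, τ i ∈ Icc s b := fun i => Icc_subset_Icc_left hst (hmem i)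
  rcases (hmem 0).1.eq_or_lt with rfl | htτ
  · exact ofReal_add_sum_le_pVar hτ hmem' hs hlt
  · have h := ofReal_add_sum_le_pVar (f := f) (p := p) (strictMono_vecCons.2 ⟨htτ, hτ⟩)
      (Fin.cases ht hmem') hs hlt
    rw [Fin.sum_univ_succ] at h
    exact (add_le_add_right (le_add_of_nonneg_left zero_le) _).trans h

lemma pVar_le_of_isControl {ω : ℝ → ℝ → ℝ} (hω : IsControl ω)
    (h : ∀ u ∈ Icc a b, ∀ v ∈ Icc a b, u ≤ v → |f v - f u| ^ p ≤ ω u v) :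
    pVar f p a b ≤ ENNReal.ofReal (ω a b) := by
  refine iSup_le fun n => iSup_le fun τ => iSup_le fun hτ => iSup_le fun hmem => ?_
  rw [← ENNReal.ofReal_sum_of_nonneg fun i _ => by positivity]
  refine ENNReal.ofReal_le_ofReal ?_
  calc ∑ i : Fin n, |f (τ i.succ) - f (τ i.castSucc)| ^ p
      ≤ ∑ i : Fin n, ω (τ i.castSucc) (τ i.succ) := Finset.sum_le_sum fun i _ =>
        h _ (hmem _) _ (hmem _) (hτ.monotone i.castSucc_le_succ)
    _ ≤ ω (τ 0) (τ (Fin.last n)) := hω.sum_le hτ.monotone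
    _ ≤ ω a b := hω.mono (hmem _).1 (hτ.monotone (Fin.zero_le _)) (hmem _).2

lemma exists_isControl_of_pVar_lt_top (hp : 0 < p) (hab : a ≤ b) (hf : pVar f p a b < ⊤) :
    ∃ ω : ℝ → ℝ → ℝ, IsControl ω ∧
      ∀ u ∈ Icc a b, ∀ v ∈ Icc a b, u ≤ v → |f v - f u| ^ p ≤ ω u v := by
  have hfin (s : Icc a b) : pVar f p s b ≠ ⊤ := ((pVar_anti_left s.2.1).trans_lt hf).ne
  let φ (s : ℝ) : ℝ := (pVar f p (projIcc a b hab s) b).toReal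
  have hφ : Antitone φ := fun s t hst =>
    ENNReal.toReal_mono (hfin _) (pVar_anti_left (monotone_projIcc hab hst))
  refine ⟨_, isControl_sub_of_antitone hφ, fun u hu v hv huv => ?_⟩
  have h := ENNReal.toReal_mono (hfin ⟨u, hu⟩) (ofReal_add_pVar_le hp huv hv.2)
  rw [ENNReal.toReal_add ENNReal.ofReal_ne_top (hfin ⟨v, hv⟩),
    ENNReal.toReal_ofReal (by positivity)] at h
  simp only [φ, projIcc_of_mem hab hu, projIcc_of_mem hab hv]
  exact le_sub_iff_add_le.2 h

lemma pVar_lt_top_of_abs_sub_le {g : ℝ → ℝ} {ω : ℝ → ℝ → ℝ} {θ : ℝ} {B C : NNReal} (hp : 0 < p)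
    (hθ : 1 ≤ θ * p) (hab : a ≤ b) (hg : pVar g p a b < ⊤) (hω : IsControl ω)
    (h : ∀ u ∈ Icc a b, ∀ v ∈ Icc a b, u ≤ v →
      |f v - f u| ≤ B * |g v - g u| + C * ω u v ^ θ) :
    pVar f p a b < ⊤ := by
  obtain ⟨ω', hω', hgω'⟩ := exists_isControl_of_pVar_lt_top hp hab hg
  have hcontrol := (hω'.const_mul (c := (2 * B) ^ p) (by positivity)).add
    (hω.const_mul (c := (2 * C) ^ p * ω a b ^ (θ * p - 1))
      (mul_nonneg (by positivity) (hω.rpow_nonneg hab)))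
  refine (pVar_le_of_isControl hcontrol fun u hu v hv huv => ?_).trans_lt ENNReal.ofReal_lt_top
  have hωuv := hω.nonneg huv
  have hωθ : (ω u v ^ θ) ^ p ≤ ω a b ^ (θ * p - 1) * ω u v := by
    rw [← Real.rpow_mul hωuv]
    exact rpow_le_rpow_sub_one_mul hωuv (hω.mono hu.1 huv hv.2) hθ
  calc |f v - f u| ^ p
      ≤ (B * |g v - g u| + C * ω u v ^ θ) ^ p :=
        Real.rpow_le_rpow (abs_nonneg _) (h u hu v hv huv) hp.le
    _ ≤ (2 * (B * |g v - g u|)) ^ p + (2 * (C * ω u v ^ θ)) ^ p :=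
        add_rpow_le_two_mul_rpow_add (by positivity) (by positivity) hp.le
    _ = (2 * B) ^ p * |g v - g u| ^ p + (2 * C) ^ p * (ω u v ^ θ) ^ p := by
        rw [← mul_assoc, ← mul_assoc,
          Real.mul_rpow (x := 2 * (B : ℝ)) (by positivity) (by positivity),
          Real.mul_rpow (x := 2 * (C : ℝ)) (by positivity) (by positivity)]
    _ ≤ (2 * B) ^ p * ω' u v + (2 * C) ^ p * ω a b ^ (θ * p - 1) * ω u v := by
        rw [mul_assoc ((2 * C : ℝ) ^ p)]
        have := hgω' u hu v hv huv
        gcongr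

end PVariation

section SmallControl

variable {ι E : Type*} [PseudoMetricSpace E]

lemma IsControl.diam_rpow_mul [Preorder ι] {ω : ι → ι → ℝ} (hω : IsControl ω) {x : ι → E}
    (hx : Bornology.IsBounded (range x)) {r : ℝ} (hr : 0 ≤ r) :
    IsControl fun s t => Metric.diam (x '' Icc s t) ^ r * ω s t where
  nonneg h := mul_nonneg (by positivity) (hω.nonneg h)
  superadditive {s u t} hsu hut := by
    have hbdd : Bornology.IsBounded (x '' Icc s t) := hx.subset (image_subset_range _ _)
    have hleft : Metric.diam (x '' Icc s u) ≤ Metric.diam (x '' Icc s t) :=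
      Metric.diam_mono (image_mono (Icc_subset_Icc_right hut)) hbdd
    have hright : Metric.diam (x '' Icc u t) ≤ Metric.diam (x '' Icc s t) :=
      Metric.diam_mono (image_mono (Icc_subset_Icc_left hsu)) hbdd
    have hωsu := hω.nonneg hsu
    have hωut := hω.nonneg hut
    calc Metric.diam (x '' Icc s u) ^ r * ω s u + Metric.diam (x '' Icc u t) ^ r * ω u t
        ≤ Metric.diam (x '' Icc s t) ^ r * ω s u + Metric.diam (x '' Icc s t) ^ r * ω u t := by
          gcongr
      _ ≤ Metric.diam (x '' Icc s t) ^ r * ω s t := by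
          rw [← mul_add]
          have := hω.superadditive hsu hut
          gcongr

lemma vanishesNearDiagonal_diam_rpow_mul {ω : ℝ → ℝ → ℝ} {x : ℝ → E} {r W : ℝ} (hr : 0 < r)
    (hx : UniformContinuous x) (hω : ∀ s t, s ≤ t → ω s t ≤ W) :
    VanishesNearDiagonal fun s t => Metric.diam (x '' Icc s t) ^ r * ω s t := by
  intro ε hε
  have hW : 0 < |W| + 1 := by positivity
  obtain ⟨δ, hδ, hxδ⟩ :=
    Metric.uniformContinuous_iff.1 hx ((ε / (|W| + 1)) ^ (1 / r)) (by positivity)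
  refine ⟨δ, hδ, fun s t hst htδ => ?_⟩
  have hdiam : Metric.diam (x '' Icc s t) ≤ (ε / (|W| + 1)) ^ (1 / r) := by
    refine Metric.diam_le_of_forall_dist_le (by positivity) ?_
    rintro _ ⟨u, hu, rfl⟩ _ ⟨v, hv, rfl⟩
    exact (hxδ ((Real.dist_le_of_mem_Icc hu hv).trans_lt htδ)).le
  calc Metric.diam (x '' Icc s t) ^ r * ω s t
      ≤ Metric.diam (x '' Icc s t) ^ r * (|W| + 1) := by
        have : ω s t ≤ |W| + 1 := by linarith [hω s t hst, le_abs_self W]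
        gcongr
    _ ≤ ((ε / (|W| + 1)) ^ (1 / r)) ^ r * (|W| + 1) := by gcongr
    _ = ε := by
        rw [← Real.rpow_mul (by positivity), one_div_mul_cancel hr.ne', Real.rpow_one,
          div_mul_cancel₀ _ hW.ne']

/-- Whether the control given by the `p`-variation is small near the diagonal is not clear a priori;
multiplying it by a positive power of the oscillation of `x` forces this, at the price of raising
`p` to `q`. -/
lemma exists_extension_isControl {x : ℝ → ℝ} {p q a b : ℝ} (hp : 0 < p) (hpq : p < q)
    (hab : a ≤ b) (hxc : ContinuousOn x (Icc a b)) (hx : pVar x p a b < ⊤) :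
    ∃ (x' : ℝ → ℝ) (ω : ℝ → ℝ → ℝ), EqOn x' x (Icc a b) ∧ IsControl ω ∧
      VanishesNearDiagonal ω ∧ ∀ s t, s ≤ t → |x' t - x' s| ≤ ω s t ^ q⁻¹ := by
  obtain ⟨ω, hω, hxω⟩ := exists_isControl_of_pVar_lt_top hp hab hx
  let clamp (s : ℝ) : ℝ := projIcc a b hab s
  have hclamp_mem (s : ℝ) : clamp s ∈ Icc a b := (projIcc a b hab s).2
  have hclamp_mono : Monotone clamp := fun s t hst => monotone_projIcc hab hst
  let x' : ℝ → ℝ := IccExtend hab ((Icc a b).domRestrict x)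
  have hx'_uc : UniformContinuous x' :=
    (CompactSpace.uniformContinuous_of_continuous hxc.domRestrict).comp
      (LipschitzWith.projIcc hab).uniformContinuous
  have hx'_bdd : Bornology.IsBounded (range x') := by
    rw [IccExtend_range]
    exact (isCompact_range hxc.domRestrict).isBounded
  have hωclamp := hω.comp_monotone hclamp_mono
  refine ⟨x', _, fun s hs => IccExtend_of_mem hab _ hs,
    hωclamp.diam_rpow_mul hx'_bdd (sub_nonneg.2 hpq.le),
    vanishesNearDiagonal_diam_rpow_mul (W := ω a b) (sub_pos.2 hpq) hx'_uc fun s t hst =>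
      hω.mono (hclamp_mem s).1 (hclamp_mono hst) (hclamp_mem t).2, fun s t hst => ?_⟩
  have hosc : |x' t - x' s| ≤ Metric.diam (x' '' Icc s t) :=
    Metric.dist_le_diam_of_mem (hx'_bdd.subset (image_subset_range _ _))
      ⟨t, right_mem_Icc.2 hst, rfl⟩ ⟨s, left_mem_Icc.2 hst, rfl⟩
  rw [Real.le_rpow_inv_iff_of_pos (abs_nonneg _)
    (mul_nonneg (by positivity) (hωclamp.nonneg hst)) (hp.trans hpq)]
  calc |x' t - x' s| ^ q = |x' t - x' s| ^ (q - p) * |x' t - x' s| ^ p := by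
        rw [← Real.rpow_add_of_nonneg (abs_nonneg _) (sub_nonneg.2 hpq.le) hp.le, sub_add_cancel]
    _ ≤ Metric.diam (x' '' Icc s t) ^ (q - p) * ω (clamp s) (clamp t) := by
        have := hxω _ (hclamp_mem s) _ (hclamp_mem t) (hclamp_mono hst)
        have := Real.rpow_le_rpow (abs_nonneg _) hosc (sub_nonneg.2 hpq.le)
        gcongr
        assumption

end SmallControl

/-! ### Riemann–Stieltjes sums -/

lemma sum_fin_succ_sub_castSucc {G : Type*} [AddCommGroup G] {n : ℕ} (f : Fin (n + 1) → G) :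
    ∑ i : Fin n, (f i.succ - f i.castSucc) = f (Fin.last n) - f 0 := by
  have h := (Fin.sum_univ_succ f).symm.trans (Fin.sum_univ_castSucc f)
  rw [Finset.sum_sub_distrib, sub_eq_sub_iff_add_eq_add, add_comm, h, add_comm]

lemma rsIntegral_of_abs_sub_le {f g h : ℝ → ℝ} {ω : ℝ → ℝ → ℝ} {a b θ : ℝ} {C : NNReal}
    (hθ : 1 < θ) (hab : a ≤ b) (hω : IsControl ω) (hω₀ : VanishesNearDiagonal ω)
    (hfg : ∀ u ξ v, a ≤ u → u ≤ ξ → ξ ≤ v → v ≤ b →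
      |f ξ * (g v - g u) - (h v - h u)| ≤ C * ω u v ^ θ) :
    RSIntegral f g a b (h b - h a) := by
  intro ε hε
  have hωab := hω.nonneg hab
  let κ : ℝ := ε / (C * ω a b + 1)
  have hκ : 0 < κ := by positivity
  obtain ⟨δ, hδ, hωδ⟩ := hω₀ (κ ^ (θ - 1)⁻¹) (by positivity)
  refine ⟨δ, hδ, fun n τ ξ hτ hτ0 hτn hξ hmesh => ?_⟩
  have hstep (i : Fin n) : τ i.castSucc ≤ τ i.succ := hτ.monotone i.castSucc_le_succ
  have herr (i : Fin n) :
      |f (ξ i) * (g (τ i.succ) - g (τ i.castSucc)) - (h (τ i.succ) - h (τ i.castSucc))| ≤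
        C * (κ * ω (τ i.castSucc) (τ i.succ)) := by
    have ha : a ≤ τ i.castSucc := hτ0 ▸ hτ.monotone (Fin.zero_le _)
    have hb : τ i.succ ≤ b := hτn ▸ hτ.monotone (Fin.le_last _)
    refine (hfg _ _ _ ha (hξ i).1 (hξ i).2 hb).trans ?_
    have := rpow_le_rpow_sub_one_mul (hω.nonneg (hstep i)) (hωδ _ _ (hstep i) (hmesh i)) hθ.le
    rw [Real.rpow_inv_rpow hκ.le (sub_pos.2 hθ).ne'] at this
    gcongr
  have htelescope : h b - h a = ∑ i : Fin n, (h (τ i.succ) - h (τ i.castSucc)) := by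
    rw [← hτ0, ← hτn]
    exact (sum_fin_succ_sub_castSucc (h ∘ τ)).symm
  calc |∑ i : Fin n, f (ξ i) * (g (τ i.succ) - g (τ i.castSucc)) - (h b - h a)|
      ≤ ∑ i : Fin n, C * (κ * ω (τ i.castSucc) (τ i.succ)) := by
        rw [htelescope, ← Finset.sum_sub_distrib]
        exact (Finset.abs_sum_le_sum_abs _ _).trans (Finset.sum_le_sum fun i _ => herr i)
    _ ≤ C * (κ * ω a b) := by
        rw [← Finset.mul_sum, ← Finset.mul_sum]
        have := hω.sum_le hτ.monotone
        rw [hτ0, hτn] at this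
        gcongr
    _ < κ * (C * ω a b + 1) := by linarith
    _ = ε := div_mul_cancel₀ _ (by positivity)

/-! ### Davie's estimate for Euler schemes -/

/-- The error `y t - y s - F (y s) (x t - x s)` of one Euler step for `dy = F(y) dx`. -/
def eulerDefect {ι : Type*} (F : ℝ → ℝ) (x y : ι → ℝ) (s t : ι) : ℝ :=
  y t - y s - F (y s) * (x t - x s)

section EulerDefect

variable {ι : Type*} {F : ℝ → ℝ} {K : NNReal} {x y : ι → ℝ}

lemma eulerDefect_self (s : ι) : eulerDefect F x y s s = 0 := by simp [eulerDefect]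

lemma eulerDefect_eq_add_add (s u t : ι) : eulerDefect F x y s t =
    eulerDefect F x y s u + eulerDefect F x y u t + (F (y u) - F (y s)) * (x t - x u) := by
  simp only [eulerDefect]
  ring

lemma abs_eulerDefect_le_add_add (hF : LipschitzWith K F) (s u t : ι) :
    |eulerDefect F x y s t| ≤ |eulerDefect F x y s u| + |eulerDefect F x y u t| +
      K * |y u - y s| * |x t - x u| := by
  rw [eulerDefect_eq_add_add s u t]
  refine (abs_add_three _ _ _).trans ?_
  rw [abs_mul]
  have : |F (y u) - F (y s)| ≤ K * |y u - y s| := hF.dist_le_mul (y u) (y s)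
  gcongr

lemma abs_sub_le_add_abs_eulerDefect (s t : ι) :
    |y t - y s| ≤ |F (y s)| * |x t - x s| + |eulerDefect F x y s t| := by
  rw [← abs_mul]
  refine le_trans (le_of_eq ?_) (abs_add_le _ _)
  simp only [eulerDefect]
  ring_nf

lemma abs_sub_le_mul_add_mul_sq {s t : ι} {P C : ℝ} (hx : |x t - x s| ≤ P)
    (hdefect : |eulerDefect F x y s t| ≤ C * P ^ 2) :
    |y t - y s| ≤ |F (y s)| * P + C * P ^ 2 :=
  (abs_sub_le_add_abs_eulerDefect s t).trans (by gcongr)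

lemma abs_comp_le_add (hF : LipschitzWith K F) (s t : ι) :
    |F (y t)| ≤ |F (y s)| + K * |y t - y s| := by
  have h : |F (y t) - F (y s)| ≤ K * |y t - y s| := hF.dist_le_mul (y t) (y s)
  linarith [abs_sub_abs_le_abs_sub (F (y t)) (F (y s))]

end EulerDefect

/-- The proportion of `w ^ (2 * α)` that is gained when `w` is split into two halves; it is
positive exactly when `α > 1 / 2`. -/
noncomputable def sewingGap (α : ℝ) : ℝ := 1 - 2 ^ (1 - 2 * α)

lemma sewingGap_pos {α : ℝ} (hα : 1 / 2 < α) : 0 < sewingGap α :=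
  sub_pos.2 (Real.rpow_lt_one_of_one_lt_of_neg one_lt_two (by linarith))

lemma sewingGap_le_one (α : ℝ) : sewingGap α ≤ 1 :=
  sub_le_self _ (by positivity)

lemma sq_rpow_add_sq_rpow_le {w₁ w₂ w α : ℝ} (hα : 0 ≤ α) (h₁ : 0 ≤ w₁) (h₁w : w₁ ≤ w / 2)
    (h₂ : 0 ≤ w₂) (h₂w : w₂ ≤ w / 2) :
    (w₁ ^ α) ^ 2 + (w₂ ^ α) ^ 2 ≤ (1 - sewingGap α) * (w ^ α) ^ 2 := by
  have hw₁ := Real.rpow_le_rpow h₁ h₁w hα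
  have hw₂ := Real.rpow_le_rpow h₂ h₂w hα
  calc (w₁ ^ α) ^ 2 + (w₂ ^ α) ^ 2 ≤ ((w / 2) ^ α) ^ 2 + ((w / 2) ^ α) ^ 2 := by gcongr
    _ = 2 * ((2 ^ α)⁻¹) ^ 2 * (w ^ α) ^ 2 := by
        rw [Real.div_rpow (by linarith) zero_le_two]
        ring
    _ = (1 - sewingGap α) * (w ^ α) ^ 2 := by
        rw [sewingGap, sub_sub_cancel, Real.rpow_sub two_pos, Real.rpow_one,
          mul_comm 2 α, Real.rpow_mul zero_le_two, Real.rpow_two, inv_pow, div_eq_mul_inv]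

section EulerScheme

variable {F : ℝ → ℝ} {K : NNReal} {α : ℝ}

lemma mul_abs_sub_mul_abs_sub_le {ι : Type*} {x y : ι → ℝ} {s u t : ι} {P C : ℝ}
    (hsmall : K * P ≤ sewingGap α / 4) (hC : 4 * K * |F (y s)| ≤ sewingGap α * C)
    (hC₀ : 0 ≤ C) (hsu : |x u - x s| ≤ P) (hut : |x t - x u| ≤ P)
    (hdefect : |eulerDefect F x y s u| ≤ C * P ^ 2) :
    K * |y u - y s| * |x t - x u| ≤ sewingGap α / 2 * C * P ^ 2 := by
  have hP : 0 ≤ P := (abs_nonneg _).trans hsu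
  calc K * |y u - y s| * |x t - x u|
      ≤ K * (|F (y s)| * P + C * P ^ 2) * P := by
        have := abs_sub_le_mul_add_mul_sq hsu hdefect
        gcongr
    _ = 4 * K * |F (y s)| * P ^ 2 / 4 + K * P * (C * P ^ 2) := by ring
    _ ≤ sewingGap α * C * P ^ 2 / 4 + sewingGap α / 4 * (C * P ^ 2) := by gcongr
    _ = sewingGap α / 2 * C * P ^ 2 := by ring

lemma abs_comp_le_two_mul {ι : Type*} {x y : ι → ℝ} {s u : ι} {P : ℝ}
    (hF : LipschitzWith K F) (hα : 1 / 2 < α) (hsmall : K * P ≤ sewingGap α / 4)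
    (hsu : |x u - x s| ≤ P)
    (hdefect : |eulerDefect F x y s u| ≤ 4 * K * |F (y u)| / sewingGap α * P ^ 2) :
    |F (y u)| ≤ 2 * |F (y s)| := by
  have hγ := sewingGap_pos hα
  have hP : 0 ≤ P := (abs_nonneg _).trans hsu
  have hincrement : K * |y u - y s| ≤ (|F (y s)| + |F (y u)|) / 4 :=
    calc K * |y u - y s|
        ≤ K * (|F (y s)| * P + 4 * K * |F (y u)| / sewingGap α * P ^ 2) := by
          have := abs_sub_le_mul_add_mul_sq hsu hdefect
          gcongr
      _ = |F (y s)| * (K * P) + 4 * |F (y u)| / sewingGap α * (K * P) * (K * P) := by ring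
      _ ≤ |F (y s)| * (sewingGap α / 4) +
            4 * |F (y u)| / sewingGap α * (sewingGap α / 4) * (sewingGap α / 4) := by gcongr
      _ = (|F (y s)| + |F (y u)|) / 4 * sewingGap α := by field_simp
      _ ≤ (|F (y s)| + |F (y u)|) / 4 :=
          mul_le_of_le_one_right (by positivity) (sewingGap_le_one α)
  linarith [abs_comp_le_add (y := y) hF s u, abs_nonneg (F (y s))]

variable {x y : ℕ → ℝ} {ω : ℕ → ℕ → ℝ}

/-- Davie's estimate: splitting the interval at the halving point of `ω` gains `sewingGap α`, and
half of that gain pays for each of the two Lipschitz terms. -/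
lemma abs_eulerDefect_le_of_abs_le (hF : LipschitzWith K F) (hα : 1 / 2 < α) (hω : IsControl ω)
    (hx : ∀ i j, i ≤ j → |x j - x i| ≤ ω i j ^ α)
    (hsmall : ∀ i j, i ≤ j → K * ω i j ^ α ≤ sewingGap α / 4)
    (hy : ∀ k, eulerDefect F x y k (k + 1) = 0) {N : ℕ} {C : ℝ}
    (hC : ∀ k ≤ N, 4 * K * |F (y k)| ≤ sewingGap α * C) {i j : ℕ} (hij : i ≤ j) (hjN : j ≤ N) :
    |eulerDefect F x y i j| ≤ C * (ω i j ^ α) ^ 2 := by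
  have hC₀ : 0 ≤ C :=
    nonneg_of_mul_nonneg_right ((by positivity : 0 ≤ 4 * K * |F (y 0)|).trans (hC 0 N.zero_le))
      (sewingGap_pos hα)
  induction hd : j - i using Nat.strong_induction_on generalizing i j with
  | _ d ih =>
    rcases hij.eq_or_lt with rfl | hlt
    · rw [eulerDefect_self, abs_zero]
      positivity
    obtain ⟨m, him, hmj, hleft, hright⟩ := hω.exists_split hlt
    have ihleft := ih _ (by lia) him (by lia) rfl
    have ihright := ih _ (by lia) (show m + 1 ≤ j from hmj) hjN rfl
    have hα₀ : 0 ≤ α := by linarith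
    have hωle {u v : ℕ} (hiu : i ≤ u) (huv : u ≤ v) (hvj : v ≤ j) : ω u v ^ α ≤ ω i j ^ α :=
      hω.rpow_mono hα₀ hiu huv hvj
    have hxle {u v : ℕ} (hiu : i ≤ u) (huv : u ≤ v) (hvj : v ≤ j) : |x v - x u| ≤ ω i j ^ α :=
      (hx u v huv).trans (hωle hiu huv hvj)
    have hsplit₁ := abs_eulerDefect_le_add_add (x := x) (y := y) hF i m j
    have hsplit₂ := abs_eulerDefect_le_add_add (x := x) (y := y) hF m (m + 1) j
    rw [hy, abs_zero] at hsplit₂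
    have hlip₁ := mul_abs_sub_mul_abs_sub_le (hsmall i j hij) (hC i (by lia)) hC₀
      (hxle le_rfl him hmj.le) (hxle him hmj.le le_rfl) <| ihleft.trans <| by
        have := hω.rpow_nonneg (α := α) him
        have := hωle le_rfl him hmj.le
        gcongr
    have hlip₂ := mul_abs_sub_mul_abs_sub_le (hsmall i j hij) (hC m (by lia)) hC₀
      (hxle him m.le_succ hmj) (hxle (him.trans m.le_succ) hmj le_rfl) <| by
        rw [hy, abs_zero]
        positivity
    have hhalves := mul_le_mul_of_nonneg_left
      (sq_rpow_add_sq_rpow_le hα₀ (hω.nonneg him) hleft (hω.nonneg hmj) hright) hC₀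
    linarith

lemma abs_eulerDefect_le_of_succ_eq_zero (hF : LipschitzWith K F) (hα : 1 / 2 < α)
    (hω : IsControl ω) (hx : ∀ i j, i ≤ j → |x j - x i| ≤ ω i j ^ α)
    (hsmall : ∀ i j, i ≤ j → K * ω i j ^ α ≤ sewingGap α / 4)
    (hy : ∀ k, eulerDefect F x y k (k + 1) = 0) {i j : ℕ} (hij : i ≤ j) :
    |eulerDefect F x y i j| ≤ 8 * K * |F (y 0)| / sewingGap α * (ω i j ^ α) ^ 2 := by
  have hγ := sewingGap_pos hα
  obtain ⟨k, hk, hmax⟩ :=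
    (Finset.range (j + 1)).exists_max_image (fun k => |F (y k)|) ⟨0, by simp⟩
  simp only [Finset.mem_range, Order.lt_add_one_iff] at hk hmax
  have hdefect {u v : ℕ} (huv : u ≤ v) (hvj : v ≤ j) :
      |eulerDefect F x y u v| ≤ 4 * K * |F (y k)| / sewingGap α * (ω u v ^ α) ^ 2 := by
    refine abs_eulerDefect_le_of_abs_le hF hα hω hx hsmall hy (fun l hl => ?_) huv hvj
    rw [mul_div_cancel₀ _ hγ.ne']
    have := hmax l hl
    gcongr
  have hmax₀ : |F (y k)| ≤ 2 * |F (y 0)| :=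
    abs_comp_le_two_mul hF hα (hsmall 0 k k.zero_le) (hx 0 k k.zero_le)
      (hdefect k.zero_le hk)
  calc |eulerDefect F x y i j|
      ≤ 4 * K * |F (y k)| / sewingGap α * (ω i j ^ α) ^ 2 := hdefect hij le_rfl
    _ ≤ 4 * K * (2 * |F (y 0)|) / sewingGap α * (ω i j ^ α) ^ 2 := by gcongr
    _ = 8 * K * |F (y 0)| / sewingGap α * (ω i j ^ α) ^ 2 := by ring

end EulerScheme

/-! ### Solutions as limits of Euler schemes -/

lemma exists_monotone_range_eq {ι : Type*} [LinearOrder ι] {D : Finset ι} (hD : D.Nonempty) :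
    ∃ τ : ℕ → ι, Monotone τ ∧ range τ = D := by
  obtain ⟨n, hn⟩ : ∃ n, D.card = n + 1 := ⟨_, (Nat.succ_pred_eq_of_pos hD.card_pos).symm⟩
  have hclamp_mono : Monotone fun k => Fin.clamp k n := fun k l hkl => by
    simpa [Fin.le_def] using Or.inl hkl
  have hclamp_surj : Function.Surjective fun k => Fin.clamp k n := fun i =>
    ⟨i, Fin.ext (by simp [i.is_le])⟩
  refine ⟨fun k => D.orderEmbOfFin hn (Fin.clamp k n),
    (D.orderEmbOfFin hn).monotone.comp hclamp_mono, ?_⟩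
  rw [← D.range_orderEmbOfFin hn]
  exact hclamp_surj.range_comp _

lemma exists_eulerDefect_succ_eq_zero (F : ℝ → ℝ) (x : ℕ → ℝ) (y₀ : ℝ) :
    ∃ y : ℕ → ℝ, y 0 = y₀ ∧ ∀ k, eulerDefect F x y k (k + 1) = 0 :=
  ⟨fun k => k.rec y₀ fun n z => z + F z * (x (n + 1) - x n), rfl, fun k => by simp [eulerDefect]⟩

section LocalSolution

variable {ι : Type*} [LinearOrder ι] {F : ℝ → ℝ} {K : NNReal} {α : ℝ} {x : ι → ℝ}
  {ω : ι → ι → ℝ} {s : ι}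

lemma exists_abs_eulerDefect_le_on_finset (hF : LipschitzWith K F) (hα : 1 / 2 < α)
    (hω : IsControl ω) (hx : ∀ u v, u ≤ v → |x v - x u| ≤ ω u v ^ α)
    (hsmall : ∀ u v, u ≤ v → K * ω u v ^ α ≤ sewingGap α / 4) (hs : IsBot s) (y₀ : ℝ)
    (D : Finset ι) :
    ∃ y : ι → ℝ, y s = y₀ ∧ ∀ u ∈ D, ∀ v ∈ D, u ≤ v →
      |eulerDefect F x y u v| ≤ 8 * K * |F y₀| / sewingGap α * (ω u v ^ α) ^ 2 := by
  obtain ⟨τ, hτ, hτD⟩ := exists_monotone_range_eq (D.insert_nonempty s)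
  have hmem {u : ι} (hu : u ∈ insert s D) : τ (Function.invFun τ u) = u :=
    Function.invFun_eq (by rwa [← mem_range, hτD, Finset.mem_coe])
  obtain ⟨z, hz₀, hz⟩ := exists_eulerDefect_succ_eq_zero F (x ∘ τ) y₀
  have hzdefect {i j : ℕ} (hij : i ≤ j) : |eulerDefect F (x ∘ τ) z i j| ≤
      8 * K * |F y₀| / sewingGap α * (ω (τ i) (τ j) ^ α) ^ 2 :=
    hz₀ ▸ abs_eulerDefect_le_of_succ_eq_zero hF hα (hω.comp_monotone hτ)
      (fun i j hij => hx _ _ (hτ hij)) (fun i j hij => hsmall _ _ (hτ hij)) hz hij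
  refine ⟨fun u => z (Function.invFun τ u), ?_, fun u hu v hv huv => ?_⟩
  · have hτs : τ (Function.invFun τ s) = s := hmem (D.mem_insert_self s)
    have hτ₀ : τ 0 = s := le_antisymm ((hτ (Nat.zero_le _)).trans_eq hτs) (hs _)
    have h := hzdefect (Nat.zero_le (Function.invFun τ s))
    simp only [eulerDefect, Function.comp_apply, hτs, hτ₀, hω.self_eq_zero,
      Real.zero_rpow (show α ≠ 0 by linarith), sub_self, mul_zero, sub_zero, hz₀, ne_eq,
      OfNat.ofNat_ne_zero, not_false_eq_true, zero_pow] at h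
    exact sub_eq_zero.1 (abs_nonpos_iff.1 h)
  · have hτu := hmem (Finset.mem_insert_of_mem hu)
    have hτv := hmem (Finset.mem_insert_of_mem hv)
    rcases huv.eq_or_lt with rfl | hlt
    · rw [eulerDefect_self, abs_zero]
      have := (sewingGap_pos hα).le
      positivity
    · have hindex : Function.invFun τ u < Function.invFun τ v :=
        hτ.reflect_lt (by rwa [hτu, hτv])
      simpa only [eulerDefect, Function.comp_apply, hτu, hτv] using hzdefect hindex.le

/-- The Euler schemes along finite sets are pointwise bounded, so they converge along an
ultrafilter refining the direction of finite sets; the estimate is closed. -/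
lemma exists_abs_eulerDefect_le (hF : LipschitzWith K F) (hα : 1 / 2 < α)
    (hω : IsControl ω) (hx : ∀ u v, u ≤ v → |x v - x u| ≤ ω u v ^ α)
    (hsmall : ∀ u v, u ≤ v → K * ω u v ^ α ≤ sewingGap α / 4) (hs : IsBot s) (y₀ : ℝ) :
    ∃ y : ι → ℝ, y s = y₀ ∧ ∀ u v, u ≤ v →
      |eulerDefect F x y u v| ≤ 8 * K * |F y₀| / sewingGap α * (ω u v ^ α) ^ 2 := by
  choose Y hYs hY using exists_abs_eulerDefect_le_on_finset hF hα hω hx hsmall hs y₀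
  let 𝒰 : Ultrafilter (Finset ι) := Ultrafilter.of atTop
  have hmem (u : ι) : ∀ᶠ D in (𝒰 : Filter (Finset ι)), u ∈ D := by
    filter_upwards [Ultrafilter.of_le atTop (eventually_ge_atTop {u})] with D hD
    exact Finset.singleton_subset_iff.1 hD
  have hlim (u : ι) : ∃ l, Tendsto (fun D => Y D u) 𝒰 (nhds l) := by
    let R := |F y₀| * |x u - x s| + 8 * K * |F y₀| / sewingGap α * (ω s u ^ α) ^ 2
    have hball : ∀ᶠ D in (𝒰 : Filter (Finset ι)), Y D u ∈ Metric.closedBall y₀ R := by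
      filter_upwards [hmem s, hmem u] with D hsD huD
      have h := (abs_sub_le_add_abs_eulerDefect (F := F) (x := x) (y := Y D) s u).trans
        (add_le_add_right (hY D s hsD u huD (hs u)) _)
      rwa [hYs] at h
    obtain ⟨l, -, hl⟩ :=
      (isCompact_closedBall y₀ R).ultrafilter_le_nhds' (𝒰.map fun D => Y D u) hball
    exact ⟨l, hl⟩
  choose y hy using hlim
  refine ⟨y, tendsto_nhds_unique (hy s) (by simp only [hYs, tendsto_const_nhds]),
    fun u v huv => ?_⟩
  have hFy : Tendsto (fun D => F (Y D u)) 𝒰 (nhds (F (y u))) :=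
    (hF.continuous.tendsto _).comp (hy u)
  refine le_of_tendsto (((hy v).sub (hy u)).sub (hFy.mul_const (x v - x u))).abs ?_
  filter_upwards [hmem u, hmem v] with D hu hv using hY D u hu v hv huv

end LocalSolution

/-! ### Gluing of local solutions -/

/-- Davie's notion of a solution of `dy = F(y) dx` on `S`: the Euler step from `u` to `v` has an
error of order `ω u v ^ (2 * α)`, uniformly in `u ≤ v` in `S`. -/
def IsDavieSolutionOn {ι : Type*} [Preorder ι] (F : ℝ → ℝ) (x : ι → ℝ) (ω : ι → ι → ℝ) (α : ℝ)
    (y : ι → ℝ) (S : Set ι) : Prop :=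
  ∃ C : NNReal, ∀ u ∈ S, ∀ v ∈ S, u ≤ v → |eulerDefect F x y u v| ≤ C * (ω u v ^ α) ^ 2

namespace IsDavieSolutionOn

variable {ι : Type*} {F : ℝ → ℝ} {K : NNReal} {α : ℝ} {x x' y y' : ι → ℝ} {ω : ι → ι → ℝ}

lemma congr [Preorder ι] {S : Set ι} (hy : IsDavieSolutionOn F x ω α y S) (hxx' : EqOn x x' S)
    (hyy' : EqOn y y' S) : IsDavieSolutionOn F x' ω α y' S := by
  obtain ⟨C, hC⟩ := hy
  refine ⟨C, fun u hu v hv huv => ?_⟩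
  simpa only [eulerDefect, hxx' hu, hxx' hv, hyy' hu, hyy' hv] using hC u hu v hv huv

lemma mono [Preorder ι] {S T : Set ι} (hy : IsDavieSolutionOn F x ω α y T) (hST : S ⊆ T) :
    IsDavieSolutionOn F x ω α y S :=
  hy.imp fun _ hC u hu v hv => hC u (hST hu) v (hST hv)

lemma exists_abs_comp_le [Preorder ι] {s t : ι} (hy : IsDavieSolutionOn F x ω α y (Icc s t))
    (hF : LipschitzWith K F) (hα : 0 ≤ α) (hω : IsControl ω)
    (hx : ∀ u ∈ Icc s t, ∀ v ∈ Icc s t, u ≤ v → |x v - x u| ≤ ω u v ^ α) :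
    ∃ A : NNReal, ∀ u ∈ Icc s t, |F (y u)| ≤ A := by
  obtain ⟨C, hC⟩ := hy
  by_cases hst : s ≤ t
  swap
  · exact ⟨0, fun u hu => absurd (hu.1.trans hu.2) hst⟩
  have hP := hω.rpow_nonneg (α := α) hst
  refine ⟨⟨|F (y s)| + K * (|F (y s)| * ω s t ^ α + C * (ω s t ^ α) ^ 2), by positivity⟩,
    fun u hu => (abs_comp_le_add hF s u).trans ?_⟩
  have hs : s ∈ Icc s t := left_mem_Icc.2 hst
  have hincrement := abs_sub_le_mul_add_mul_sq (hx s hs u hu hu.1) (hC s hs u hu hu.1)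
  calc |F (y s)| + K * |y u - y s|
      ≤ |F (y s)| + K * (|F (y s)| * ω s u ^ α + C * (ω s u ^ α) ^ 2) := by gcongr
    _ ≤ |F (y s)| + K * (|F (y s)| * ω s t ^ α + C * (ω s t ^ α) ^ 2) := by
        have := hω.rpow_nonneg (α := α) hu.1
        have := hω.rpow_mono hα le_rfl hu.1 hu.2
        gcongr

lemma exists_abs_sub_le [Preorder ι] {s t : ι} (hy : IsDavieSolutionOn F x ω α y (Icc s t))
    (hF : LipschitzWith K F) (hα : 0 ≤ α) (hω : IsControl ω)
    (hx : ∀ u ∈ Icc s t, ∀ v ∈ Icc s t, u ≤ v → |x v - x u| ≤ ω u v ^ α) :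
    ∃ B : NNReal, ∀ u ∈ Icc s t, ∀ v ∈ Icc s t, u ≤ v → |y v - y u| ≤ B * ω u v ^ α := by
  obtain ⟨A, hA⟩ := hy.exists_abs_comp_le hF hα hω hx
  obtain ⟨C, hC⟩ := hy
  refine ⟨A + C * (ω s t ^ α).toNNReal, fun u hu v hv huv => ?_⟩
  have hωuv := hω.rpow_nonneg (α := α) huv
  calc |y v - y u| ≤ |F (y u)| * ω u v ^ α + C * (ω u v ^ α) ^ 2 :=
        abs_sub_le_mul_add_mul_sq (hx u hu v hv huv) (hC u hu v hv huv)
    _ ≤ A * ω u v ^ α + C * ((ω s t ^ α).toNNReal * ω u v ^ α) := by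
        rw [sq]
        have := hA u hu
        have := (hω.rpow_mono hα hu.1 huv hv.2).trans (Real.le_coe_toNNReal _)
        gcongr
    _ = (A + C * (ω s t ^ α).toNNReal : NNReal) * ω u v ^ α := by
        push_cast
        ring

lemma union_Icc [LinearOrder ι] {s r t : ι} (hsr : IsDavieSolutionOn F x ω α y (Icc s r))
    (hrt : IsDavieSolutionOn F x ω α y (Icc r t)) (hF : LipschitzWith K F) (hα : 0 ≤ α)
    (hω : IsControl ω) (hx : ∀ u v, u ≤ v → |x v - x u| ≤ ω u v ^ α) :
    IsDavieSolutionOn F x ω α y (Icc s t) := by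
  obtain ⟨B, hB⟩ := hsr.exists_abs_sub_le hF hα hω fun u _ v _ => hx u v
  obtain ⟨C₁, hC₁⟩ := hsr
  obtain ⟨C₂, hC₂⟩ := hrt
  refine ⟨C₁ + C₂ + K * B, fun u hu v hv huv => ?_⟩
  have hωuv := hω.rpow_nonneg (α := α) huv
  push_cast
  have hKB : 0 ≤ K * B * (ω u v ^ α) ^ 2 := by positivity
  have hC₁uv : 0 ≤ C₁ * (ω u v ^ α) ^ 2 := by positivity
  have hC₂uv : 0 ≤ C₂ * (ω u v ^ α) ^ 2 := by positivity
  rcases le_total v r with hvr | hrv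
  · linarith [hC₁ u ⟨hu.1, huv.trans hvr⟩ v ⟨hv.1, hvr⟩ huv]
  rcases le_total r u with hru | hur
  · linarith [hC₂ u ⟨hru, hu.2⟩ v ⟨hrv, hv.2⟩ huv]
  have hr : r ∈ Icc s r := ⟨hu.1.trans hur, le_rfl⟩
  have hωur := hω.rpow_nonneg (α := α) hur
  have hωrv := hω.rpow_nonneg (α := α) hrv
  calc |eulerDefect F x y u v|
      ≤ |eulerDefect F x y u r| + |eulerDefect F x y r v| + K * |y r - y u| * |x v - x r| :=
        abs_eulerDefect_le_add_add hF u r v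
    _ ≤ C₁ * (ω u r ^ α) ^ 2 + C₂ * (ω r v ^ α) ^ 2 + K * (B * ω u r ^ α) * ω r v ^ α := by
        have := hC₁ u ⟨hu.1, hur⟩ r hr hur
        have := hC₂ r ⟨le_rfl, hrv.trans hv.2⟩ v ⟨hrv, hv.2⟩ hrv
        have := hB u ⟨hu.1, hur⟩ r hr hur
        have := hx r v hrv
        gcongr
    _ ≤ C₁ * (ω u v ^ α) ^ 2 + C₂ * (ω u v ^ α) ^ 2 + K * (B * ω u v ^ α) * ω u v ^ α := by
        have := hω.rpow_mono hα le_rfl hur hrv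
        have := hω.rpow_mono hα hur hrv le_rfl
        gcongr
    _ = (C₁ + C₂ + K * B) * (ω u v ^ α) ^ 2 := by ring

end IsDavieSolutionOn

section GlobalSolution

variable {F : ℝ → ℝ} {K : NNReal} {α : ℝ} {x : ℝ → ℝ} {ω : ℝ → ℝ → ℝ}

lemma exists_isDavieSolutionOn_Icc_of_small (hF : LipschitzWith K F) (hα : 1 / 2 < α)
    (hω : IsControl ω) (hx : ∀ u v, u ≤ v → |x v - x u| ≤ ω u v ^ α) {s t : ℝ} (hst : s ≤ t)
    (hsmall : K * ω s t ^ α ≤ sewingGap α / 4) (y₀ : ℝ) :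
    ∃ y : ℝ → ℝ, y s = y₀ ∧ IsDavieSolutionOn F x ω α y (Icc s t) := by
  obtain ⟨y, hys, hy⟩ := exists_abs_eulerDefect_le (ι := Icc s t) (x := fun u => x u)
    (s := ⟨s, left_mem_Icc.2 hst⟩) hF hα (hω.comp_monotone (Subtype.mono_coe _))
    (fun u v huv => hx u v huv)
    (fun u v huv => le_trans
      (mul_le_mul_of_nonneg_left (hω.rpow_mono (by linarith) u.2.1 huv v.2.2) K.2) hsmall)
    (fun u => u.2.1) y₀
  refine ⟨IccExtend hst y, by rwa [IccExtend_left], 8 * K * ‖F y₀‖₊ / (sewingGap α).toNNReal,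
    fun u hu v hv huv => ?_⟩
  have h := hy ⟨u, hu⟩ ⟨v, hv⟩ huv
  simpa [eulerDefect, IccExtend_of_mem hst y hu, IccExtend_of_mem hst y hv,
    (sewingGap_pos hα).le] using h

lemma exists_isDavieSolutionOn_Icc_add (hF : LipschitzWith K F) (hα : 1 / 2 < α)
    (hω : IsControl ω) (hx : ∀ u v, u ≤ v → |x v - x u| ≤ ω u v ^ α) {η : ℝ} (hη : 0 ≤ η)
    (hsmall : ∀ s, K * ω s (s + η) ^ α ≤ sewingGap α / 4) (s y₀ : ℝ) :
    ∀ n : ℕ, ∃ y : ℝ → ℝ, y s = y₀ ∧ IsDavieSolutionOn F x ω α y (Icc s (s + n * η))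
  | 0 => ⟨fun _ => y₀, rfl, 0, by
      intro u hu v hv _
      simp only [CharP.cast_eq_zero, zero_mul, add_zero, Icc_self, mem_singleton_iff] at hu hv
      simp [hu, hv, eulerDefect_self]⟩
  | n + 1 => by
    obtain ⟨y, hys, hy⟩ := exists_isDavieSolutionOn_Icc_add hF hα hω hx hη hsmall s y₀ n
    have hsr : s ≤ s + n * η := by nlinarith [n.cast_nonneg (α := ℝ)]
    set r := s + n * η
    obtain ⟨z, hzr, hz⟩ := exists_isDavieSolutionOn_Icc_of_small hF hα hω hx
      (le_add_of_nonneg_right hη) (hsmall r) (y r)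
    refine ⟨fun u => if u ≤ r then y u else z u, (if_pos hsr).trans hys, ?_⟩
    have hend : s + (n + 1 : ℕ) * η = r + η := by
      push_cast
      ring
    rw [hend]
    refine (hy.congr (eqOn_refl _ _) fun u hu => (if_pos hu.2).symm).union_Icc
      (hz.congr (eqOn_refl _ _) fun u hu => ?_) hF (by linarith) hω hx
    rcases hu.1.eq_or_lt with rfl | hlt
    · simp [hzr]
    · exact (if_neg hlt.not_ge).symm

lemma exists_isDavieSolutionOn_Icc (hF : LipschitzWith K F) (hα : 1 / 2 < α)
    (hω : IsControl ω) (hω₀ : VanishesNearDiagonal ω)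
    (hx : ∀ u v, u ≤ v → |x v - x u| ≤ ω u v ^ α) (a b y₀ : ℝ) :
    ∃ y : ℝ → ℝ, y a = y₀ ∧ IsDavieSolutionOn F x ω α y (Icc a b) := by
  have hα₀ : 0 < α := by linarith
  have hγ := sewingGap_pos hα
  let κ : ℝ := sewingGap α / 4 / (K + 1)
  obtain ⟨δ, hδ, hωδ⟩ := hω₀ (κ ^ α⁻¹) (by positivity)
  have hsmall (s : ℝ) : K * ω s (s + δ / 2) ^ α ≤ sewingGap α / 4 := by
    have hs : s ≤ s + δ / 2 := by linarith
    have hωα : ω s (s + δ / 2) ^ α ≤ κ :=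
      (Real.le_rpow_inv_iff_of_pos (hω.nonneg hs) (by positivity) hα₀).1
        (hωδ _ _ hs (by linarith))
    calc K * ω s (s + δ / 2) ^ α ≤ (K + 1) * κ := by
          have := hω.rpow_nonneg (α := α) hs
          gcongr
          linarith
      _ = sewingGap α / 4 := mul_div_cancel₀ _ (by positivity)
  obtain ⟨n, hn⟩ := exists_nat_ge ((b - a) / (δ / 2))
  obtain ⟨y, hya, hy⟩ :=
    exists_isDavieSolutionOn_Icc_add hF hα hω hx (half_pos hδ).le hsmall a y₀ n
  have hb : b ≤ a + n * (δ / 2) := by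
    linarith [(div_le_iff₀ (half_pos hδ)).1 hn]
  exact ⟨y, hya, hy.mono (Icc_subset_Icc_right hb)⟩

end GlobalSolution

lemma IsDavieSolutionOn.pVar_lt_top {F x y : ℝ → ℝ} {K : NNReal} {ω : ℝ → ℝ → ℝ} {p α a b : ℝ}
    (hy : IsDavieSolutionOn F x ω α y (Icc a b)) (hp : 0 < p) (hpα : 1 ≤ 2 * α * p) (hab : a ≤ b)
    (hF : LipschitzWith K F) (hω : IsControl ω)
    (hx : ∀ u ∈ Icc a b, ∀ v ∈ Icc a b, u ≤ v → |x v - x u| ≤ ω u v ^ α) (hxp : pVar x p a b < ⊤) :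
    pVar y p a b < ⊤ := by
  have hα : 0 ≤ α := by
    by_contra! hneg
    linarith [mul_neg_of_neg_of_pos hneg hp]
  obtain ⟨B, hB⟩ := hy.exists_abs_comp_le hF hα hω hx
  obtain ⟨C, hC⟩ := hy
  refine pVar_lt_top_of_abs_sub_le (B := B) (C := C) hp hpα hab hxp hω fun u hu v hv huv => ?_
  have := hB u hu
  have := hC u hu v hv huv
  rw [mul_comm 2 α, Real.rpow_mul (hω.nonneg huv), Real.rpow_two]
  exact (abs_sub_le_add_abs_eulerDefect u v).trans (by gcongr)

lemma IsDavieSolutionOn.rsIntegral {F x y : ℝ → ℝ} {K : NNReal} {ω : ℝ → ℝ → ℝ} {α a b : ℝ}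
    (hy : IsDavieSolutionOn F x ω α y (Icc a b)) (hα : 1 / 2 < α) (hab : a ≤ b)
    (hF : LipschitzWith K F) (hω : IsControl ω) (hω₀ : VanishesNearDiagonal ω)
    (hx : ∀ u ∈ Icc a b, ∀ v ∈ Icc a b, u ≤ v → |x v - x u| ≤ ω u v ^ α) :
    RSIntegral (fun s => F (y s)) x a b (y b - y a) := by
  have hα₀ : 0 ≤ α := by linarith
  obtain ⟨B, hB⟩ := hy.exists_abs_sub_le hF hα₀ hω hx
  obtain ⟨C, hC⟩ := hy
  refine rsIntegral_of_abs_sub_le (θ := 2 * α) (C := K * B + C) (by linarith) hab hω hω₀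
    fun u ξ v hau huξ hξv hvb => ?_
  have huv := huξ.trans hξv
  have hu : u ∈ Icc a b := ⟨hau, huv.trans hvb⟩
  have hv : v ∈ Icc a b := ⟨hau.trans huv, hvb⟩
  have hωuv := hω.rpow_nonneg (α := α) huv
  rw [mul_comm 2 α, Real.rpow_mul (hω.nonneg huv), Real.rpow_two]
  have hlip : |F (y ξ) - F (y u)| ≤ K * (B * ω u v ^ α) := by
    refine (hF.dist_le_mul (y ξ) (y u)).trans (mul_le_mul_of_nonneg_left ?_ K.2)
    refine (hB u hu ξ ⟨hau.trans huξ, hξv.trans hvb⟩ huξ).trans ?_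
    have := hω.rpow_mono hα₀ le_rfl huξ hξv
    gcongr
  calc |F (y ξ) * (x v - x u) - (y v - y u)|
      = |(F (y ξ) - F (y u)) * (x v - x u) - eulerDefect F x y u v| := by
        simp only [eulerDefect]
        ring_nf
    _ ≤ |F (y ξ) - F (y u)| * |x v - x u| + |eulerDefect F x y u v| := by
        rw [← abs_mul]
        exact abs_sub _ _
    _ ≤ K * (B * ω u v ^ α) * ω u v ^ α + C * (ω u v ^ α) ^ 2 := by
        have := hx u hu v hv huv
        have := hC u hu v hv huv
        gcongr
    _ = (K * B + C : NNReal) * (ω u v ^ α) ^ 2 := by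
        push_cast
        ring

theorem integral_equation_solution_lipschitz_general {p a b : ℝ} (hp : 0 < p) (hp2 : p < 2)
    (hab : a ≤ b) (y₀ : ℝ) {x : ℝ → ℝ} (hxc : ContinuousOn x (Icc a b)) (hx : pVar x p a b < ⊤)
    {F : ℝ → ℝ} {K : NNReal} (hF : LipschitzWith K F) :
    ∃ y : ℝ → ℝ, pVar y p a b < ⊤ ∧
      ∀ t ∈ Icc a b, RSIntegral (fun s => F (y s)) x a t (y t - y₀) := by
  obtain ⟨q, hpq, hq⟩ : ∃ q, p < q ∧ q < min 2 (2 * p) :=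
    exists_between (lt_min hp2 (by linarith))
  obtain ⟨hq2, hq2p⟩ := lt_min_iff.1 hq
  have hq₀ : 0 < q := hp.trans hpq
  have hα : 1 / 2 < q⁻¹ := by
    rw [one_div]
    gcongr
  have hpα : 1 ≤ 2 * q⁻¹ * p := by
    field_simp
    exact hq2p.le
  obtain ⟨x', ω, hx'x, hω, hω₀, hx'ω⟩ := exists_extension_isControl hp hpq hab hxc hx
  obtain ⟨y, hya, hy'⟩ := exists_isDavieSolutionOn_Icc hF hα hω hω₀ hx'ω a b y₀
  have hy : IsDavieSolutionOn F x ω q⁻¹ y (Icc a b) := hy'.congr hx'x (eqOn_refl _ _)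
  have hxω : ∀ u ∈ Icc a b, ∀ v ∈ Icc a b, u ≤ v → |x v - x u| ≤ ω u v ^ q⁻¹ :=
    fun u hu v hv huv => hx'x hu ▸ hx'x hv ▸ hx'ω u v huv
  refine ⟨y, hy.pVar_lt_top hp hpα hab hF hω hxω hx, fun t ht => hya ▸ ?_⟩
  have hsub : Icc a t ⊆ Icc a b := Icc_subset_Icc_right ht.2
  exact (hy.mono hsub).rsIntegral hα ht.1 hF hω hω₀ fun u hu v hv => hxω u (hsub hu) v (hsub hv)

/-- Existence of a solution of finite `p`-variation to the integral equation
`y(t) = y₀ + ∫_a^t F(y(s)) dx(s)` for a globally `1`-Lipschitz `F`. -/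
theorem integral_equation_solution_lipschitz
    (p : ℝ) (hp : 1 < p) (hp2 : p < 2) (a b : ℝ) (hab : a < b) (y₀ : ℝ)
    (x : ℝ → ℝ) (hxc : ContinuousOn x (Set.Icc a b)) (hx : pVar x p a b < ⊤)
    (F : ℝ → ℝ) (K : ℝ) (hK : 0 ≤ K)
    (hF : ∀ u v : ℝ, |F u - F v| ≤ K * |u - v|) :
    ∃ y : ℝ → ℝ, pVar y p a b < ⊤ ∧
      ∀ t ∈ Set.Icc a b, RSIntegral (fun s => F (y s)) x a t (y t - y₀) := by
  exact integral_equation_solution_lipschitz_general (by linarith) hp2 hab.le y₀ hxc hx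
    (LipschitzWith.of_dist_le_mul (K := ⟨K, hK⟩) hF)
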